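/- Fix 1/4 < H < 1/2, let λ(x) = (1+|x|^2)^{H-1}, and let D_t(x,h) = G_t(x+h) - G_t(x) with G_t the heat kernel. Then for every T > 0 there is a constant C depending only on T and H such that for all t ∈ (0,T] and all z ∈ ℝ: ∫_ℝ ∫_ℝ |D_t(x,h)|^2 |h|^{2H-2} λ(z-x) dx dh ≤ C t^{H-1} λ(z). -/

import Mathlib

/-!
A Gaussian is the square of a wider Gaussian, which is bounded and Lipschitz at the scale `√t`;
hence `D_t(x, h)² ≤ t^{-1/2} min(1, h² / t) (G_t(x + h) + G_t(x))`. Averaging the weight `λ` against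
`G_t` costs only a constant for `t ≤ T`, because `λ(z - x) ≲ (1 + x²)^{1 - H} λ(z)`. What is left
is the integral over `h` of `K_t(h) (λ(z) + λ(z + h))` with `K_t(h) = min(1, h² / t) |h|^{2H - 2}`.
Either `λ(z + h) ≲ λ(z)` or `|h| ≳ √(1 + z²)` and then `K_t(h) ≲ λ(z)`, so
`K_t(h) λ(z + h) ≲ λ(z) (K_t(h) + λ(z + h))`, and both summands are integrable. Finally
`∫ K_t` is a multiple of `t^{H - 1/2}` by scaling.
-/

open MeasureTheory Real Set

/-- The one-dimensional heat kernel. -/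
noncomputable def heatKernel (t x : ℝ) : ℝ :=
  (Real.sqrt (4 * Real.pi * t))⁻¹ * Real.exp (-x ^ 2 / (4 * t))

lemma rpow_le_rpow_neg_mul_rpow_of_le_mul {u v c α : ℝ} (hu : 0 < u) (hv : 0 < v) (hc : 0 < c)
    (hα : α ≤ 0) (h : v ≤ c * u) : u ^ α ≤ c ^ (-α) * v ^ α :=
  calc u ^ α = c ^ (-α) * (c * u) ^ α := by
        rw [mul_rpow hc.le hu.le, ← mul_assoc, ← rpow_add hc, neg_add_cancel, rpow_zero, one_mul]
    _ ≤ c ^ (-α) * v ^ α := by gcongr ?_ * ?_; exact rpow_le_rpow_of_nonpos hv h hα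

section PowerWeight

variable {E : Type*} [NormedAddCommGroup E]

/-- The weight `(1 + ‖x‖²) ^ α`, a power of the Japanese bracket. The weight `λ` of the theorem is
the case `α = H - 1` on the real line. -/
noncomputable def powerWeight (α : ℝ) (x : E) : ℝ :=
  (1 + ‖x‖ ^ 2) ^ α

lemma powerWeight_pos (α : ℝ) (x : E) : 0 < powerWeight α x := by
  unfold powerWeight; positivity

lemma continuous_powerWeight (α : ℝ) : Continuous (powerWeight α : E → ℝ) :=
  (continuous_const.add (continuous_norm.pow 2)).rpow_const fun x =>
    Or.inl (by positivity : 1 + ‖x‖ ^ 2 ≠ 0)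

lemma powerWeight_sub_le {α : ℝ} (hα : α ≤ 0) (z x : E) :
    powerWeight α (z - x) ≤ 2 ^ (-α) * powerWeight (-α) x * powerWeight α z := by
  have peetre : 1 + ‖z‖ ^ 2 ≤ 2 * (1 + ‖x‖ ^ 2) * (1 + ‖z - x‖ ^ 2) := by
    have triangle : ‖z‖ ≤ ‖z - x‖ + ‖x‖ := by simpa using norm_add_le (z - x) x
    nlinarith [norm_nonneg z, sq_nonneg (‖z - x‖ - ‖x‖), sq_nonneg (‖x‖ * ‖z - x‖)]
  unfold powerWeight
  rw [← mul_rpow (by norm_num) (by positivity)]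
  exact rpow_le_rpow_neg_mul_rpow_of_le_mul (by positivity) (by positivity) (by positivity) hα
    peetre

lemma integrable_powerWeight [NormedSpace ℝ E] [FiniteDimensional ℝ E] [MeasurableSpace E]
    [BorelSpace E] (μ : Measure E) [μ.IsAddHaarMeasure] {α : ℝ}
    (hα : 2 * α < -Module.finrank ℝ E) : Integrable (powerWeight α : E → ℝ) μ := by
  have h := integrable_rpow_neg_one_add_norm_sq (E := E) (μ := μ) (r := -(2 * α)) (by linarith)
  rwa [neg_neg, mul_div_cancel_left₀ α two_ne_zero] at h

end PowerWeight

section HeatKernel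

lemma heatKernel_nonneg (t x : ℝ) : 0 ≤ heatKernel t x := by
  unfold heatKernel; positivity

lemma continuous_heatKernel (t : ℝ) : Continuous (heatKernel t) := by
  unfold heatKernel; fun_prop

lemma heatKernel_eq_gaussianPDFReal {t : ℝ} (ht : 0 < t) (x : ℝ) :
    heatKernel t x = ProbabilityTheory.gaussianPDFReal 0 (2 * t).toNNReal x := by
  rw [heatKernel, ProbabilityTheory.gaussianPDFReal, coe_toNNReal _ (by positivity), sub_zero]
  ring_nf

lemma lintegral_heatKernel {t : ℝ} (ht : 0 < t) :
    ∫⁻ x, ENNReal.ofReal (heatKernel t x) = 1 := by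
  simp_rw [heatKernel_eq_gaussianPDFReal ht]
  exact ProbabilityTheory.lintegral_gaussianPDFReal_eq_one 0 (toNNReal_pos.2 (by positivity)).ne'

lemma lipschitzWith_exp_neg_sq_div_two : LipschitzWith 1 fun x : ℝ => exp (-x ^ 2 / 2) := by
  refine lipschitzWith_of_nnnorm_deriv_le (by fun_prop) fun x => ?_
  have hderiv : HasDerivAt (fun x : ℝ => exp (-x ^ 2 / 2)) (exp (-x ^ 2 / 2) * -x) x := by
    convert ((hasDerivAt_pow 2 x).fun_neg.div_const 2).exp using 2
    ring
  have hx : |x| ≤ exp (x ^ 2 / 2) := by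
    nlinarith [add_one_le_exp (x ^ 2 / 2), sq_nonneg (|x| - 1), sq_abs x]
  rw [hderiv.deriv, ← NNReal.coe_le_coe, coe_nnnorm, norm_mul, norm_neg, norm_eq_abs, norm_eq_abs,
    abs_of_pos (exp_pos _), neg_div, exp_neg, NNReal.coe_one]
  exact inv_mul_le_one_of_le₀ hx (exp_pos _).le

lemma sq_exp_neg_sq_sub_le (a b : ℝ) :
    (exp (-a ^ 2) - exp (-b ^ 2)) ^ 2
      ≤ 2 * min 1 ((a - b) ^ 2) * (exp (-a ^ 2) + exp (-b ^ 2)) := by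
  have hsq (c : ℝ) : exp (-c ^ 2) = exp (-c ^ 2 / 2) ^ 2 := by
    rw [← exp_nat_mul]; ring_nf
  have hle (c : ℝ) : exp (-c ^ 2 / 2) ≤ 1 := exp_le_one_iff.2 (by nlinarith [sq_nonneg c])
  have hlip : |exp (-a ^ 2 / 2) - exp (-b ^ 2 / 2)| ≤ |a - b| := by
    simpa [dist_eq] using lipschitzWith_exp_neg_sq_div_two.dist_le_mul a b
  rw [hsq a, hsq b]
  set u := exp (-a ^ 2 / 2)
  set v := exp (-b ^ 2 / 2)
  have hu : 0 < u := exp_pos _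
  have hv : 0 < v := exp_pos _
  have hdiff : (u - v) ^ 2 ≤ min 1 ((a - b) ^ 2) :=
    le_min ((sq_le_one_iff_abs_le_one _).2 (abs_le.2 ⟨by linarith [hle b], by linarith [hle a]⟩))
      (sq_le_sq.2 hlip)
  calc (u ^ 2 - v ^ 2) ^ 2 = (u - v) ^ 2 * (u + v) ^ 2 := by ring
    _ ≤ min 1 ((a - b) ^ 2) * (2 * (u ^ 2 + v ^ 2)) := by gcongr; exact add_sq_le
    _ = 2 * min 1 ((a - b) ^ 2) * (u ^ 2 + v ^ 2) := by ring

lemma sq_heatKernel_sub_le {t : ℝ} (ht : 0 < t) (x y : ℝ) :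
    (heatKernel t x - heatKernel t y) ^ 2
      ≤ (√t)⁻¹ * min 1 ((x - y) ^ 2 / t) * (heatKernel t x + heatKernel t y) := by
  have hg := sq_exp_neg_sq_sub_le (x / √(4 * t)) (y / √(4 * t))
  rw [← sub_div] at hg
  simp only [div_pow, sq_sqrt (by positivity : 0 ≤ 4 * t), ← neg_div] at hg
  have hnorm : 2 * (√(4 * π * t))⁻¹ ≤ (√t)⁻¹ := by
    have : 2 * √t ≤ √(4 * π * t) := by
      rw [le_sqrt (by positivity) (by positivity), mul_pow, sq_sqrt ht.le]
      nlinarith [pi_gt_three]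
    rw [← div_eq_mul_inv, ← one_div, div_le_div_iff₀ (by positivity) (by positivity)]
    linarith
  have hmin : min 1 ((x - y) ^ 2 / (4 * t)) ≤ min 1 ((x - y) ^ 2 / t) := by
    gcongr; linarith
  unfold heatKernel
  set c := (√(4 * π * t))⁻¹
  have : 0 ≤ c := by positivity
  set m := min 1 ((x - y) ^ 2 / (4 * t))
  have : 0 ≤ m := by positivity
  calc (c * exp (-x ^ 2 / (4 * t)) - c * exp (-y ^ 2 / (4 * t))) ^ 2
      = c ^ 2 * (exp (-x ^ 2 / (4 * t)) - exp (-y ^ 2 / (4 * t))) ^ 2 := by ring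
    _ ≤ c ^ 2 * (2 * m * (exp (-x ^ 2 / (4 * t)) + exp (-y ^ 2 / (4 * t)))) := by gcongr
    _ = 2 * c * m * (c * exp (-x ^ 2 / (4 * t)) + c * exp (-y ^ 2 / (4 * t))) := by ring
    _ ≤ _ := by gcongr

lemma one_add_rpow_le_mul_exp {p s : ℝ} (hp : 0 ≤ p) (hs : 0 ≤ s) :
    (1 + s) ^ p ≤ (1 + p) ^ p * exp s := by
  have hbase : 1 + s ≤ (1 + p) * exp (s / (1 + p)) := by
    have h := add_one_le_exp (s / (1 + p))
    calc 1 + s ≤ (1 + p) * (s / (1 + p) + 1) := by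
          rw [mul_add, mul_div_cancel₀ _ (by positivity)]; linarith
      _ ≤ _ := by gcongr
  have hexp : s / (1 + p) * p ≤ s := by
    rw [div_mul_eq_mul_div, div_le_iff₀ (by positivity)]; nlinarith
  calc (1 + s) ^ p ≤ ((1 + p) * exp (s / (1 + p))) ^ p := by gcongr
    _ = (1 + p) ^ p * exp (s / (1 + p) * p) := by
        rw [mul_rpow (by positivity) (exp_pos _).le, ← exp_mul]
    _ ≤ (1 + p) ^ p * exp s := by gcongr

lemma heatKernel_mul_exp_eq {t : ℝ} (ht : 0 < t) (x : ℝ) :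
    heatKernel t x * exp (x ^ 2 / (8 * t)) = √2 * heatKernel (2 * t) x := by
  have hsqrt : √(4 * π * (2 * t)) = √2 * √(4 * π * t) := by
    rw [← sqrt_mul (by norm_num)]; ring_nf
  unfold heatKernel
  rw [hsqrt, mul_assoc, ← exp_add, mul_inv]
  field_simp
  ring_nf

lemma heatKernel_mul_powerWeight_le {p t T : ℝ} (hp : 0 ≤ p) (ht : t ∈ Ioc 0 T) (x : ℝ) :
    heatKernel t x * powerWeight p x
      ≤ (1 + 8 * T) ^ p * (1 + p) ^ p * √2 * heatKernel (2 * t) x := by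
  obtain ⟨ht0, htT⟩ := ht
  have hT : 0 < T := ht0.trans_le htT
  set s := x ^ 2 / (8 * t) with hs
  have hs0 : 0 ≤ s := by positivity
  have hx : 1 + ‖x‖ ^ 2 ≤ (1 + 8 * T) * (1 + s) := by
    have hxs : x ^ 2 = 8 * t * s := by rw [hs]; field_simp
    rw [norm_eq_abs, sq_abs, hxs]
    nlinarith
  have hG := heatKernel_nonneg t x
  calc heatKernel t x * powerWeight p x
      ≤ heatKernel t x * ((1 + 8 * T) * (1 + s)) ^ p := by unfold powerWeight; gcongr
    _ = heatKernel t x * ((1 + 8 * T) ^ p * (1 + s) ^ p) := by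
        rw [mul_rpow (by positivity) (by positivity)]
    _ ≤ heatKernel t x * ((1 + 8 * T) ^ p * ((1 + p) ^ p * exp s)) := by
        gcongr; exact one_add_rpow_le_mul_exp hp hs0
    _ = (1 + 8 * T) ^ p * (1 + p) ^ p * (heatKernel t x * exp s) := by ring
    _ = _ := by rw [heatKernel_mul_exp_eq ht0]; ring

lemma exists_lintegral_heatKernel_mul_powerWeight_le {α T : ℝ} (hα : α ≤ 0) (hT : 0 < T) :
    ∃ C : ℝ, 0 < C ∧ ∀ t ∈ Ioc 0 T, ∀ z : ℝ,
      ∫⁻ x, ENNReal.ofReal (heatKernel t x * powerWeight α (z - x))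
        ≤ ENNReal.ofReal (C * powerWeight α z) := by
  have hp : 0 ≤ -α := neg_nonneg.2 hα
  set M := (1 + 8 * T) ^ (-α) * (1 + -α) ^ (-α) * √2
  refine ⟨2 ^ (-α) * M, by positivity, fun t ht z => ?_⟩
  have hw := (powerWeight_pos α z).le
  have hpointwise (x : ℝ) : heatKernel t x * powerWeight α (z - x)
      ≤ 2 ^ (-α) * M * powerWeight α z * heatKernel (2 * t) x := by
    have hG := heatKernel_nonneg t x
    calc heatKernel t x * powerWeight α (z - x)
        ≤ heatKernel t x * (2 ^ (-α) * powerWeight (-α) x * powerWeight α z) := by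
          gcongr; exact powerWeight_sub_le hα z x
      _ = 2 ^ (-α) * powerWeight α z * (heatKernel t x * powerWeight (-α) x) := by ring
      _ ≤ 2 ^ (-α) * powerWeight α z * (M * heatKernel (2 * t) x) := by
          exact mul_le_mul_of_nonneg_left (heatKernel_mul_powerWeight_le hp ht x) (by positivity)
      _ = _ := by ring
  calc _ ≤ ∫⁻ x, ENNReal.ofReal (2 ^ (-α) * M * powerWeight α z * heatKernel (2 * t) x) :=
        lintegral_mono fun x => ENNReal.ofReal_le_ofReal (hpointwise x)
    _ = ENNReal.ofReal (2 ^ (-α) * M * powerWeight α z) := by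
        simp_rw [ENNReal.ofReal_mul (by positivity : 0 ≤ 2 ^ (-α) * M * powerWeight α z)]
        rw [lintegral_const_mul' _ _ ENNReal.ofReal_ne_top,
          lintegral_heatKernel (mul_pos two_pos ht.1), mul_one]

lemma exists_lintegral_sq_heatKernel_sub_mul_powerWeight_le {α T : ℝ} (hα : α ≤ 0) (hT : 0 < T) :
    ∃ C : ℝ, 0 < C ∧ ∀ t ∈ Ioc 0 T, ∀ z h : ℝ,
      ∫⁻ x, ENNReal.ofReal ((heatKernel t (x + h) - heatKernel t x) ^ 2 * powerWeight α (z - x))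
        ≤ ENNReal.ofReal
          (C * (√t)⁻¹ * min 1 (h ^ 2 / t) * (powerWeight α z + powerWeight α (z + h))) := by
  obtain ⟨C, hC, hmean⟩ := exists_lintegral_heatKernel_mul_powerWeight_le hα hT
  refine ⟨C, hC, fun t ht z h => ?_⟩
  have ht0 : 0 < t := ht.1
  set A := (√t)⁻¹ * min 1 (h ^ 2 / t) with hA
  have hA0 : 0 ≤ A := by positivity
  set g : ℝ → ℝ → ENNReal := fun y x =>
    ENNReal.ofReal (heatKernel t x * powerWeight α (y - x)) with hg
  have hg_meas : Measurable (g z) := ENNReal.measurable_ofReal.comp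
    ((continuous_heatKernel t).mul
      ((continuous_powerWeight α).comp (continuous_const.sub continuous_id))).measurable
  have hpointwise (x : ℝ) :
      ENNReal.ofReal ((heatKernel t (x + h) - heatKernel t x) ^ 2 * powerWeight α (z - x))
        ≤ ENNReal.ofReal A * (g z x + g (z + h) (x + h)) := by
    have hw := (powerWeight_pos α (z - x)).le
    have hG := heatKernel_nonneg t
    have hD := sq_heatKernel_sub_le ht0 (x + h) x
    rw [add_sub_cancel_left, ← hA] at hD
    simp only [hg, add_sub_add_right_eq_sub]
    rw [← ENNReal.ofReal_add (mul_nonneg (hG _) hw) (mul_nonneg (hG _) hw),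
      ← ENNReal.ofReal_mul hA0]
    refine ENNReal.ofReal_le_ofReal ((mul_le_mul_of_nonneg_right hD hw).trans_eq ?_)
    ring
  calc _ ≤ ∫⁻ x, ENNReal.ofReal A * (g z x + g (z + h) (x + h)) := lintegral_mono hpointwise
    _ = ENNReal.ofReal A * ((∫⁻ x, g z x) + ∫⁻ x, g (z + h) x) := by
        rw [lintegral_const_mul' _ _ ENNReal.ofReal_ne_top, lintegral_add_left hg_meas,
          lintegral_add_right_eq_self (g (z + h)) h]
    _ ≤ ENNReal.ofReal A * (ENNReal.ofReal (C * powerWeight α z)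
          + ENNReal.ofReal (C * powerWeight α (z + h))) := by
        gcongr
        exacts [hmean t ht z, hmean t ht (z + h)]
    _ = _ := by
        have hw (y : ℝ) : 0 ≤ C * powerWeight α y := mul_nonneg hC.le (powerWeight_pos α y).le
        rw [← ENNReal.ofReal_add (hw _) (hw _), ← ENNReal.ofReal_mul hA0, hA]
        ring_nf

end HeatKernel

section TruncatedRieszKernel

/-- The Riesz kernel `|h| ^ (2α)` of the fractional energy, truncated below the diffusive scale
`|h| = √t` by the factor which the increments of the heat kernel provide. -/
noncomputable def truncatedRieszKernel (α t h : ℝ) : ℝ :=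
  min 1 (h ^ 2 / t) * |h| ^ (2 * α)

lemma truncatedRieszKernel_nonneg {t : ℝ} (ht : 0 < t) (α h : ℝ) :
    0 ≤ truncatedRieszKernel α t h := by
  unfold truncatedRieszKernel; positivity

lemma truncatedRieszKernel_le (α t h : ℝ) : truncatedRieszKernel α t h ≤ (h ^ 2) ^ α := by
  rw [← sq_abs h, ← rpow_natCast_mul (abs_nonneg h)]
  exact mul_le_of_le_one_left (by positivity) (min_le_left _ _)

lemma truncatedRieszKernel_eq_rpow_mul {t : ℝ} (ht : 0 < t) (α h : ℝ) :
    truncatedRieszKernel α t h = t ^ α * truncatedRieszKernel α 1 (h / √t) := by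
  have hsqrt : √t ^ (2 * α) = t ^ α := by
    rw [sqrt_eq_rpow, ← rpow_mul ht.le]; ring_nf
  unfold truncatedRieszKernel
  rw [div_one, div_pow, sq_sqrt ht.le, abs_div, abs_of_pos (sqrt_pos.2 ht),
    div_rpow (abs_nonneg h) (sqrt_nonneg t), hsqrt]
  field_simp

lemma integrable_truncatedRieszKernel_one {α : ℝ} (hα : α ∈ Ioo (-(3 / 2)) (-(1 / 2))) :
    Integrable (truncatedRieszKernel α 1) := by
  obtain ⟨hlo, hhi⟩ := hα
  have hnear : IntegrableOn (truncatedRieszKernel α 1) (Ioc 0 1) := by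
    have hpow : IntegrableOn (fun h : ℝ => h ^ (2 + 2 * α)) (Ioc 0 1) :=
      (intervalIntegrable_iff_integrableOn_Ioc_of_le zero_le_one).1
        (intervalIntegral.intervalIntegrable_rpow' (by linarith))
    refine hpow.congr_fun (fun h hh => ?_) measurableSet_Ioc
    simp only [truncatedRieszKernel, div_one, abs_of_pos hh.1,
      min_eq_right (pow_le_one₀ hh.1.le hh.2), rpow_add hh.1, rpow_two]
  have hfar : IntegrableOn (truncatedRieszKernel α 1) (Ioi 1) := by
    refine (integrableOn_Ioi_rpow_of_lt (a := 2 * α) (by linarith) one_pos).congr_fun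
      (fun h hh => ?_) measurableSet_Ioi
    have hh1 : 1 < h := hh
    rw [truncatedRieszKernel, div_one, abs_of_pos (by linarith),
      min_eq_left (one_le_pow₀ hh1.le), one_mul]
  have hhalf := hnear.union hfar
  rw [Ioc_union_Ioi_eq_Ioi zero_le_one] at hhalf
  have heven : (fun h : ℝ => truncatedRieszKernel α 1 ‖h‖) = truncatedRieszKernel α 1 := by
    funext h
    simp only [truncatedRieszKernel, norm_eq_abs, sq_abs, abs_abs]
  rw [← heven, integrable_fun_norm_addHaar]
  simpa using hhalf

lemma integrable_truncatedRieszKernel {α t : ℝ} (hα : α ∈ Ioo (-(3 / 2)) (-(1 / 2)))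
    (ht : 0 < t) : Integrable (truncatedRieszKernel α t) := by
  rw [funext (truncatedRieszKernel_eq_rpow_mul ht α)]
  exact ((integrable_truncatedRieszKernel_one hα).comp_div (sqrt_pos.2 ht).ne').const_mul _

lemma integral_truncatedRieszKernel {t : ℝ} (ht : 0 < t) (α : ℝ) :
    ∫ h, truncatedRieszKernel α t h = t ^ α * √t * ∫ h, truncatedRieszKernel α 1 h := by
  simp_rw [truncatedRieszKernel_eq_rpow_mul ht α]
  rw [integral_const_mul, Measure.integral_comp_div (truncatedRieszKernel α 1),
    abs_of_pos (sqrt_pos.2 ht), smul_eq_mul, mul_assoc]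

lemma truncatedRieszKernel_mul_powerWeight_add_le {α t : ℝ} (hα : α ≤ 0) (ht : 0 < t) (z h : ℝ) :
    truncatedRieszKernel α t h * powerWeight α (z + h)
      ≤ 4 ^ (-α) * powerWeight α z * (truncatedRieszKernel α t h + powerWeight α (z + h)) := by
  have hK := truncatedRieszKernel_nonneg ht α h
  have hw := (powerWeight_pos α (z + h)).le
  have hB : 0 ≤ 4 ^ (-α) * powerWeight α z := mul_nonneg (by positivity) (powerWeight_pos α z).le
  rw [mul_add]
  rcases le_total (1 + ‖z‖ ^ 2) (4 * (1 + ‖z + h‖ ^ 2)) with hnear | hfar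
  · have hweight : powerWeight α (z + h) ≤ 4 ^ (-α) * powerWeight α z :=
      rpow_le_rpow_neg_mul_rpow_of_le_mul (by positivity) (by positivity) (by norm_num) hα hnear
    nlinarith [mul_nonneg hB hw]
  · simp only [norm_eq_abs, sq_abs] at hfar
    have hlarge : 1 + z ^ 2 ≤ 4 * h ^ 2 := by nlinarith [sq_nonneg (z + 2 * h)]
    have hkernel : truncatedRieszKernel α t h ≤ 4 ^ (-α) * powerWeight α z := by
      refine (truncatedRieszKernel_le α t h).trans ?_
      rw [powerWeight, norm_eq_abs, sq_abs]
      exact rpow_le_rpow_neg_mul_rpow_of_le_mul (by nlinarith [sq_nonneg z]) (by positivity)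
        (by norm_num) hα hlarge
    nlinarith [mul_nonneg hB hK]

lemma lintegral_truncatedRieszKernel_mul_powerWeight_le {α t : ℝ}
    (hα : α ∈ Ioo (-(3 / 2)) (-(1 / 2))) (ht : 0 < t) (z : ℝ) :
    ∫⁻ h, ENNReal.ofReal
        (truncatedRieszKernel α t h * (powerWeight α z + powerWeight α (z + h)))
      ≤ ENNReal.ofReal (powerWeight α z * ((1 + 4 ^ (-α)) * (∫ h, truncatedRieszKernel α t h)
        + 4 ^ (-α) * ∫ x : ℝ, powerWeight α x)) := by
  have hK := (integrable_truncatedRieszKernel hα ht).const_mul (1 + 4 ^ (-α))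
  have hw : Integrable fun h : ℝ => 4 ^ (-α) * powerWeight α (z + h) :=
    ((integrable_powerWeight volume (by simpa using by linarith [hα.2])).comp_add_left
      z).const_mul _
  have hnonneg (h : ℝ) : 0 ≤ powerWeight α z * ((1 + 4 ^ (-α)) * truncatedRieszKernel α t h
      + 4 ^ (-α) * powerWeight α (z + h)) :=
    mul_nonneg (powerWeight_pos α z).le (add_nonneg
      (mul_nonneg (by positivity) (truncatedRieszKernel_nonneg ht α h))
      (mul_nonneg (by positivity) (powerWeight_pos α _).le))
  calc _ ≤ ∫⁻ h, ENNReal.ofReal (powerWeight α z * ((1 + 4 ^ (-α)) * truncatedRieszKernel α t h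
          + 4 ^ (-α) * powerWeight α (z + h))) := by
        refine lintegral_mono fun h => ENNReal.ofReal_le_ofReal ?_
        have hmul := truncatedRieszKernel_mul_powerWeight_add_le
          (by linarith [hα.2] : α ≤ 0) ht z h
        linarith
    _ = _ := by
        rw [← ofReal_integral_eq_lintegral_ofReal ((hK.fun_add hw).const_mul _)
            (ae_of_all _ hnonneg),
          integral_const_mul, integral_add hK hw, integral_const_mul, integral_const_mul,
          integral_add_left_eq_self (powerWeight α) z]

lemma exists_lintegral_truncatedRieszKernel_mul_powerWeight_le {α T : ℝ}
    (hα : α ∈ Ioo (-(3 / 2)) (-(1 / 2))) (hT : 0 < T) :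
    ∃ C : ℝ, 0 < C ∧ ∀ t ∈ Ioc 0 T, ∀ z : ℝ,
      ∫⁻ h, ENNReal.ofReal
          (truncatedRieszKernel α t h * (powerWeight α z + powerWeight α (z + h)))
        ≤ ENNReal.ofReal (C * (√t * t ^ α) * powerWeight α z) := by
  set k := ∫ h, truncatedRieszKernel α 1 h
  set L := ∫ x : ℝ, powerWeight α x
  have hk : 0 ≤ k := integral_nonneg fun h => truncatedRieszKernel_nonneg one_pos α h
  have hL : 0 ≤ L := integral_nonneg fun x => (powerWeight_pos α x).le
  refine ⟨(1 + 4 ^ (-α)) * k + 4 ^ (-α) * L * T ^ (-1 / 2 - α) + 1, by positivity,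
    fun t ⟨ht, htT⟩ z => ?_⟩
  refine (lintegral_truncatedRieszKernel_mul_powerWeight_le hα ht z).trans
    (ENNReal.ofReal_le_ofReal ?_)
  have hone : 1 ≤ T ^ (-1 / 2 - α) * (√t * t ^ α) := by
    calc 1 = t ^ (-1 / 2 - α) * (√t * t ^ α) := by
          rw [sqrt_eq_rpow, ← rpow_add ht, ← rpow_add ht]
          ring_nf
          exact (rpow_zero t).symm
      _ ≤ _ := by gcongr; linarith [hα.2]
  rw [integral_truncatedRieszKernel ht, mul_comm (powerWeight α z)]
  refine mul_le_mul_of_nonneg_right ?_ (powerWeight_pos α z).le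
  calc (1 + 4 ^ (-α)) * (t ^ α * √t * k) + 4 ^ (-α) * L
      ≤ (1 + 4 ^ (-α)) * (t ^ α * √t * k)
          + 4 ^ (-α) * L * (T ^ (-1 / 2 - α) * (√t * t ^ α)) :=
        add_le_add_right (le_mul_of_one_le_right (by positivity) hone) _
    _ = ((1 + 4 ^ (-α)) * k + 4 ^ (-α) * L * T ^ (-1 / 2 - α)) * (√t * t ^ α) := by ring
    _ ≤ _ := mul_le_mul_of_nonneg_right (le_add_of_nonneg_right zero_le_one) (by positivity)

end TruncatedRieszKernel

lemma exists_lintegral_weighted_increment_le {α T : ℝ} (hα : α ≤ 0) (hT : 0 < T) :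
    ∃ C : ℝ, 0 < C ∧ ∀ t ∈ Ioc 0 T, ∀ z h : ℝ,
      ∫⁻ x, ENNReal.ofReal (|heatKernel t (x + h) - heatKernel t x| ^ 2 * |h| ^ (2 * α)
          * powerWeight α (z - x))
        ≤ ENNReal.ofReal (C * (√t)⁻¹) * ENNReal.ofReal
          (truncatedRieszKernel α t h * (powerWeight α z + powerWeight α (z + h))) := by
  obtain ⟨C, hC, hincrement⟩ := exists_lintegral_sq_heatKernel_sub_mul_powerWeight_le hα hT
  refine ⟨C, hC, fun t ht z h => ?_⟩
  have hh : 0 ≤ |h| ^ (2 * α) := by positivity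
  simp_rw [sq_abs, mul_right_comm _ (|h| ^ (2 * α)), ENNReal.ofReal_mul' hh]
  rw [lintegral_mul_const' _ _ ENNReal.ofReal_ne_top]
  refine (mul_le_mul_left (hincrement t ht z h) _).trans_eq ?_
  rw [← ENNReal.ofReal_mul' hh, ← ENNReal.ofReal_mul (by positivity), truncatedRieszKernel]
  ring_nf

theorem stmt9_general (H : ℝ) (hH : H ∈ Set.Ioo (-(1 / 2) : ℝ) (1 / 2)) (T : ℝ) (hT : 0 < T) :
    ∃ C : ℝ, 0 < C ∧ ∀ t ∈ Set.Ioc (0 : ℝ) T, ∀ z : ℝ,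
      (∫⁻ h : ℝ, ∫⁻ x : ℝ, ENNReal.ofReal
          (|heatKernel t (x + h) - heatKernel t x| ^ 2 * |h| ^ (2 * H - 2)
            * (1 + |z - x| ^ 2) ^ (H - 1)))
        ≤ ENNReal.ofReal (C * t ^ (H - 1) * (1 + |z| ^ 2) ^ (H - 1)) := by
  have hα : H - 1 ∈ Ioo (-(3 / 2)) (-(1 / 2)) := ⟨by linarith [hH.1], by linarith [hH.2]⟩
  obtain ⟨A, hA, hinner⟩ :=
    exists_lintegral_weighted_increment_le (by linarith [hα.2] : H - 1 ≤ 0) hT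
  obtain ⟨B, hB, houter⟩ := exists_lintegral_truncatedRieszKernel_mul_powerWeight_le hα hT
  refine ⟨A * B, mul_pos hA hB, fun t ht z => ?_⟩
  rw [show 2 * H - 2 = 2 * (H - 1) by ring]
  have hsqrt : 0 < √t := sqrt_pos.2 ht.1
  calc _ ≤ ∫⁻ h, ENNReal.ofReal (A * (√t)⁻¹) * ENNReal.ofReal (truncatedRieszKernel (H - 1) t h
          * (powerWeight (H - 1) z + powerWeight (H - 1) (z + h))) :=
        lintegral_mono (hinner t ht z)
    _ ≤ ENNReal.ofReal (A * (√t)⁻¹)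
          * ENNReal.ofReal (B * (√t * t ^ (H - 1)) * powerWeight (H - 1) z) := by
        rw [lintegral_const_mul' _ _ ENNReal.ofReal_ne_top]
        gcongr
        exact houter t ht z
    _ = ENNReal.ofReal (A * B * t ^ (H - 1) * powerWeight (H - 1) z) := by
        rw [← ENNReal.ofReal_mul (by positivity)]
        field_simp

/-- Weighted first-order fractional energy bound for the heat kernel increment:
for `H ∈ (1/4,1/2)`, `λ(x) = (1+|x|²)^{H-1}`, and all `t ∈ (0,T]`, `z ∈ ℝ`,
`∫∫ |D_t(x,h)|² |h|^{2H-2} λ(z-x) dx dh ≤ C t^{H-1} λ(z)`. -/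
theorem stmt9 (H : ℝ) (hH : H ∈ Set.Ioo (1 / 4 : ℝ) (1 / 2)) (T : ℝ) (hT : 0 < T) :
    ∃ C : ℝ, 0 < C ∧ ∀ t ∈ Set.Ioc (0 : ℝ) T, ∀ z : ℝ,
      (∫⁻ h : ℝ, ∫⁻ x : ℝ, ENNReal.ofReal
          (|heatKernel t (x + h) - heatKernel t x| ^ 2 * |h| ^ (2 * H - 2)
            * (1 + |z - x| ^ 2) ^ (H - 1)))
        ≤ ENNReal.ofReal (C * t ^ (H - 1) * (1 + |z| ^ 2) ^ (H - 1)) :=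
  stmt9_general H ⟨by linarith [hH.1], hH.2⟩ T hT
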